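/- arXiv:1804.01325 — 2 statements merged into one kernel-verified Lean document; each statement's English description precedes it below -/
import Mathlib

section
/- The resistance matrix R is nonsingular, and R⁻¹ = −(1/2) L + τ (τᵀ R τ)⁻¹ τᵀ. -/
open Matrix Finset
open scoped Kronecker

noncomputable section

/-- The `ns × s` matrix `1 ⊗ Iₛ`, where `1` is the all-ones column vector. -/
def oneKron (n s : ℕ) : Matrix (Fin n × Fin s) (Fin s) ℝ :=
  Matrix.of fun p b => if p.2 = b then 1 else 0

/-- The `ns × ns` matrix `J ⊗ Iₛ`, where `J` is the all-ones matrix. -/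
def JKron (n s : ℕ) : Matrix (Fin n × Fin s) (Fin n × Fin s) ℝ :=
  (Matrix.of fun _ _ : Fin n => (1 : ℝ)) ⊗ₖ (1 : Matrix (Fin s) (Fin s) ℝ)

/-- The Laplacian matrix of a graph whose edges `{i,j}` are weighted by
positive definite `s × s` matrices `W i j`: the `(i,i)` block is
`Σ_{j ∼ i} (W i j)⁻¹`, the `(i,j)` block for `i ≠ j` is `-(W i j)⁻¹` if `i ∼ j`
and `0` otherwise. -/
def lap {n s : ℕ} (G : SimpleGraph (Fin n)) [DecidableRel G.Adj]
    (W : Fin n → Fin n → Matrix (Fin s) (Fin s) ℝ) :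
    Matrix (Fin n × Fin s) (Fin n × Fin s) ℝ :=
  Matrix.of fun p q =>
    if p.1 = q.1 then (∑ k ∈ univ.filter (fun k => G.Adj p.1 k), (W p.1 k)⁻¹) p.2 q.2
    else if G.Adj p.1 q.1 then -((W p.1 q.1)⁻¹ p.2 q.2) else 0

/-- The four Penrose conditions: `Adag` is a Moore–Penrose inverse of `A`. -/
def IsMoorePenrose {m : Type*} [Fintype m] (A Adag : Matrix m m ℝ) : Prop :=
  A * Adag * A = A ∧ Adag * A * Adag = Adag ∧ (A * Adag)ᵀ = A * Adag ∧ (Adag * A)ᵀ = Adag * A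

/-- The `s × s` block of an `ns × ns` matrix in block position `(i, j)`. -/
def blk {n s : ℕ} (A : Matrix (Fin n × Fin s) (Fin n × Fin s) ℝ) (i j : Fin n) :
    Matrix (Fin s) (Fin s) ℝ :=
  Matrix.of fun a b => A (i, a) (j, b)

/-- The resistance matrix built from a Moore–Penrose inverse `Ldag` of the Laplacian:
its `(i,j)` block is `K_{ii} + K_{jj} - 2 K_{ij}`, where `K_{ij}` are the blocks of `Ldag`. -/
def resist {n s : ℕ} (Ldag : Matrix (Fin n × Fin s) (Fin n × Fin s) ℝ) :
    Matrix (Fin n × Fin s) (Fin n × Fin s) ℝ :=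
  Matrix.of fun p q =>
    Ldag (p.1, p.2) (p.1, q.2) + Ldag (q.1, p.2) (q.1, q.2) - 2 * Ldag p q

/-- The `ns × s` matrix `τ`, whose `i`-th block is `2 Iₛ - Σ_{j ∼ i} (W i j)⁻¹ R_{ji}`. -/
def tauMat {n s : ℕ} (G : SimpleGraph (Fin n)) [DecidableRel G.Adj]
    (W : Fin n → Fin n → Matrix (Fin s) (Fin s) ℝ)
    (R : Matrix (Fin n × Fin s) (Fin n × Fin s) ℝ) :
    Matrix (Fin n × Fin s) (Fin s) ℝ :=
  Matrix.of fun p b =>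
    ((2 : ℝ) • (1 : Matrix (Fin s) (Fin s) ℝ) -
      ∑ j ∈ univ.filter (fun j => G.Adj p.1 j), (W p.1 j)⁻¹ * blk R j p.1) p.2 b

/-- The block diagonal matrix `X̄` with the same diagonal blocks as `X`. -/
def bdiag {n s : ℕ} (X : Matrix (Fin n × Fin s) (Fin n × Fin s) ℝ) :
    Matrix (Fin n × Fin s) (Fin n × Fin s) ℝ :=
  Matrix.of fun p q => if p.1 = q.1 then X (p.1, p.2) (p.1, q.2) else 0

/-!
Write `U = 1 ⊗ Iₛ`, `K = L†`, and let `M` be the column of diagonal blocks of `K`, so that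
`R = M Uᵀ + U Mᵀ - 2 K`. Since `L` and `K` are symmetric with kernel the column space of `U`,
`L K = K L = I - U Uᵀ / n`. Hence `L R = τ Uᵀ - 2 I` for `τ = L M + (2 / n) U`, and comparing
diagonal blocks identifies this matrix with the `τ` of the theorem. Moreover `Uᵀ τ = 2 I` and
`R τ = U X`, where `X = Mᵀ L M + (4 / n) Uᵀ M` is positive definite because `Uᵀ M` is the sum of
the diagonal blocks of `K`. Therefore `τᵀ R τ = 2 X`, and multiplying out verifies that the claimed
inverse is a right inverse of `R`.
-/

namespace IsMoorePenrose

variable {m : Type*} [Fintype m] {A B C : Matrix m m ℝ}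

protected theorem transpose (h : IsMoorePenrose A B) : IsMoorePenrose Aᵀ Bᵀ := by
  obtain ⟨hABA, hBAB, hAB, hBA⟩ := h
  refine ⟨?_, ?_, ?_, ?_⟩
  · rw [Matrix.mul_assoc, ← transpose_mul, ← transpose_mul, hABA]
  · rw [Matrix.mul_assoc, ← transpose_mul, ← transpose_mul, hBAB]
  · rw [← transpose_mul, hBA, hBA]
  · rw [← transpose_mul, hAB, hAB]

protected theorem unique (hB : IsMoorePenrose A B) (hC : IsMoorePenrose A C) : B = C := by
  obtain ⟨hABA, hBAB, hAB, hBA⟩ := hB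
  obtain ⟨hACA, hCAC, hAC, hCA⟩ := hC
  have hleft : A * B = A * C :=
    calc A * B = (A * C * A * B)ᵀ := by rw [hACA, hAB]
      _ = (A * B)ᵀ * (A * C)ᵀ := by rw [Matrix.mul_assoc (A * C), transpose_mul]
      _ = A * C := by rw [hAB, hAC, ← Matrix.mul_assoc, hABA]
  have hright : B * A = C * A :=
    calc B * A = (B * (A * C * A))ᵀ := by rw [hACA, hBA]
      _ = (C * A)ᵀ * (B * A)ᵀ := by rw [← transpose_mul]; simp only [Matrix.mul_assoc]
      _ = C * A := by rw [hCA, hBA, Matrix.mul_assoc, ← Matrix.mul_assoc A, hABA]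
  calc B = B * (A * B) := by rw [← Matrix.mul_assoc, hBAB]
    _ = C := by rw [hleft, ← Matrix.mul_assoc, hright, hCAC]

theorem transpose_eq (h : IsMoorePenrose A B) (hA : Aᵀ = A) : Bᵀ = B :=
  IsMoorePenrose.unique (hA ▸ h.transpose) h

protected theorem mul_comm (h : IsMoorePenrose A B) (hA : Aᵀ = A) : A * B = B * A := by
  rw [← h.2.2.2, transpose_mul, hA, h.transpose_eq hA]

protected theorem posSemidef (h : IsMoorePenrose A B) (hA : A.PosSemidef) : B.PosSemidef := by
  have hB := hA.conjTranspose_mul_mul_same B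
  rwa [conjTranspose_eq_transpose_of_trivial, h.transpose_eq hA.1, h.2.1] at hB

theorem mulVec_eq_zero_iff (h : IsMoorePenrose A B) (hA : Aᵀ = A) {v : m → ℝ} :
    B *ᵥ v = 0 ↔ A *ᵥ v = 0 := by
  have hcomm := h.mul_comm hA
  constructor <;> intro hv
  · rw [← h.1, Matrix.mul_assoc, ← hcomm, ← Matrix.mul_assoc, ← mulVec_mulVec, hv, mulVec_zero]
  · rw [← h.2.1, Matrix.mul_assoc, hcomm, ← Matrix.mul_assoc, ← mulVec_mulVec, hv, mulVec_zero]

end IsMoorePenrose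

section Kernel

variable {𝕜 l m k r : Type*} [Semiring 𝕜] [Fintype m] [Fintype k]
  {A : Matrix l m 𝕜} {U : Matrix m k 𝕜}

theorem mul_eq_zero_of_ker_eq_range (hker : ∀ v, A *ᵥ v = 0 ↔ ∃ c, v = U *ᵥ c) : A * U = 0 := by
  classical
  refine ext_of_mulVec_single fun b => ?_
  rw [← mulVec_mulVec, (hker _).2 ⟨_, rfl⟩, zero_mulVec]

theorem exists_eq_mul_of_ker_le_range (hker : ∀ v, A *ᵥ v = 0 → ∃ c, v = U *ᵥ c)
    {X : Matrix m r 𝕜} (hX : A * X = 0) : ∃ C : Matrix k r 𝕜, X = U * C := by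
  have hcol (q : r) : ∃ c, X.col q = U *ᵥ c := hker _ (funext fun p => congrFun₂ hX p q)
  choose c hc using hcol
  exact ⟨(Matrix.of c)ᵀ, Matrix.ext fun p q => congrFun (hc q) p⟩

end Kernel

theorem IsMoorePenrose.mul_eq_one_sub {m k : Type*} [Fintype m] [Fintype k] [DecidableEq m]
    [DecidableEq k] {A B : Matrix m m ℝ} {U : Matrix m k ℝ} {c : ℝ}
    (h : IsMoorePenrose A B) (hker : ∀ v, A *ᵥ v = 0 ↔ ∃ x, v = U *ᵥ x)
    (hc : c ≠ 0) (hU : Uᵀ * U = c • 1) : B * A = 1 - c⁻¹ • (U * Uᵀ) := by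
  obtain ⟨hABA, -, -, hBA⟩ := h
  obtain ⟨C, hC⟩ := exists_eq_mul_of_ker_le_range (X := 1 - B * A) (fun v => (hker v).1) <| by
    rw [Matrix.mul_sub, ← Matrix.mul_assoc, hABA, Matrix.mul_one, sub_self]
  have hUBA : Uᵀ * (B * A) = 0 := by
    rw [← hBA, ← transpose_mul, Matrix.mul_assoc, mul_eq_zero_of_ker_eq_range hker,
      Matrix.mul_zero, transpose_zero]
  have hUC : Uᵀ = c • C :=
    calc Uᵀ = Uᵀ * (1 - B * A) := by rw [Matrix.mul_sub, hUBA, Matrix.mul_one, sub_zero]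
      _ = c • C := by rw [hC, ← Matrix.mul_assoc, hU, Matrix.smul_mul, Matrix.one_mul]
  rw [hUC, Matrix.mul_smul, inv_smul_smul₀ hc, ← hC, sub_sub_cancel]

section ResistanceAlgebra

variable {𝕜 m k : Type*} [Field 𝕜]
  {L K R : Matrix m m 𝕜} {U M τ : Matrix m k 𝕜} {X : Matrix k k 𝕜} {c : 𝕜}

/-- The resistance matrix of `K` relative to arbitrary matrices `U` and `M`; `resist K` is the case
where `U = 1 ⊗ Iₛ` and `M` is the column of diagonal blocks of `K`. -/
def resistOf [Fintype k] (K : Matrix m m 𝕜) (U M : Matrix m k 𝕜) : Matrix m m 𝕜 :=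
  M * Uᵀ + U * Mᵀ - (2 : 𝕜) • K

/-- The matrix `τ` attached to `resistOf K U M`, in closed form: here `c` is the scalar with
`Uᵀ * U = c • 1`, so `c = n` for `U = 1 ⊗ Iₛ`. -/
def tauOf [Fintype m] (L : Matrix m m 𝕜) (U M : Matrix m k 𝕜) (c : 𝕜) : Matrix m k 𝕜 :=
  L * M + (2 / c) • U

theorem transpose_resistOf [Fintype k] (hK : Kᵀ = K) : (resistOf K U M)ᵀ = resistOf K U M := by
  simp [resistOf, hK, add_comm]

theorem mul_resistOf [Fintype m] [Fintype k] [DecidableEq m] (hLU : L * U = 0)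
    (hLK : L * K = 1 - c⁻¹ • (U * Uᵀ)) :
    L * resistOf K U M = tauOf L U M c * Uᵀ - (2 : 𝕜) • 1 := by
  rw [resistOf, tauOf, Matrix.mul_sub, Matrix.mul_add, ← Matrix.mul_assoc, ← Matrix.mul_assoc,
    hLU, Matrix.mul_smul, hLK, Matrix.add_mul, Matrix.smul_mul, Matrix.zero_mul, div_eq_mul_inv]
  module

theorem transpose_mul_tauOf [Fintype m] [DecidableEq k] (hc : c ≠ 0) (hUL : Uᵀ * L = 0)
    (hU : Uᵀ * U = c • 1) :
    Uᵀ * tauOf L U M c = (2 : 𝕜) • 1 := by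
  rw [tauOf, Matrix.mul_add, ← Matrix.mul_assoc, hUL, Matrix.zero_mul, zero_add, Matrix.mul_smul,
    hU, smul_smul, div_mul_cancel₀ _ hc]

theorem resistOf_mul_tauOf [Fintype m] [Fintype k] [DecidableEq m] [DecidableEq k]
    (hKU : K * U = 0) (hKL : K * L = 1 - c⁻¹ • (U * Uᵀ)) (hUM : (Uᵀ * M)ᵀ = Uᵀ * M)
    (hUτ : Uᵀ * tauOf L U M c = (2 : 𝕜) • 1) :
    resistOf K U M * tauOf L U M c = U * (Mᵀ * L * M + (4 / c) • (Uᵀ * M)) := by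
  have hKτ : K * tauOf L U M c = M - c⁻¹ • (U * (Uᵀ * M)) := by
    rw [tauOf, Matrix.mul_add, ← Matrix.mul_assoc, hKL, Matrix.mul_smul, hKU, smul_zero, add_zero,
      Matrix.sub_mul, Matrix.one_mul, Matrix.smul_mul, Matrix.mul_assoc]
  have hMU : Mᵀ * U = Uᵀ * M := by rw [← hUM, transpose_mul, transpose_transpose]
  have hMτ : Mᵀ * tauOf L U M c = Mᵀ * L * M + (2 / c) • (Uᵀ * M) := by
    rw [tauOf, Matrix.mul_add, Matrix.mul_smul, hMU, Matrix.mul_assoc]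
  calc resistOf K U M * tauOf L U M c
      = M * (Uᵀ * tauOf L U M c) + U * (Mᵀ * tauOf L U M c)
          - (2 : 𝕜) • (K * tauOf L U M c) := by
        simp only [resistOf, Matrix.sub_mul, Matrix.add_mul, Matrix.smul_mul, Matrix.mul_assoc]
    _ = U * (Mᵀ * L * M + (4 / c) • (Uᵀ * M)) := by
        rw [hUτ, hMτ, hKτ]
        simp only [Matrix.mul_add, Matrix.mul_smul, Matrix.mul_one, div_eq_mul_inv]
        module

theorem mul_neg_half_smul_add_eq_one [Fintype m] [Fintype k] [DecidableEq m] [DecidableEq k]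
    (h2 : (2 : 𝕜) ≠ 0) (hX : IsUnit X.det)
    (hRL : R * L = U * τᵀ - (2 : 𝕜) • 1) (hRτ : R * τ = U * X) (hτU : τᵀ * U = (2 : 𝕜) • 1) :
    R * (-(((1 : 𝕜) / 2) • L) + τ * (τᵀ * R * τ)⁻¹ * τᵀ) = 1 := by
  have hτRτ : τᵀ * R * τ = (2 : 𝕜) • X := by
    rw [Matrix.mul_assoc, hRτ, ← Matrix.mul_assoc, hτU, Matrix.smul_mul, Matrix.one_mul]
  have hinv : (τᵀ * R * τ)⁻¹ = ((1 : 𝕜) / 2) • X⁻¹ := by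
    refine inv_eq_right_inv ?_
    rw [hτRτ, Matrix.smul_mul, Matrix.mul_smul, mul_nonsing_inv _ hX, smul_smul,
      mul_one_div_cancel h2, one_smul]
  have hRτX : R * (τ * X⁻¹ * τᵀ) = U * τᵀ := by
    rw [← Matrix.mul_assoc, ← Matrix.mul_assoc, hRτ, mul_nonsing_inv_cancel_right _ _ hX]
  rw [hinv, Matrix.mul_add, Matrix.mul_neg, Matrix.mul_smul, hRL, Matrix.mul_smul, Matrix.smul_mul,
    Matrix.mul_smul, hRτX, smul_sub, smul_smul, one_div_mul_cancel h2]
  module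

end ResistanceAlgebra

section Blocks

variable {n s : ℕ} {X K : Matrix (Fin n × Fin s) (Fin n × Fin s) ℝ}

theorem oneKron_mulVec_apply (c : Fin s → ℝ) (p : Fin n × Fin s) :
    (oneKron n s *ᵥ c) p = c p.2 := by
  simp [oneKron, mulVec, dotProduct]

theorem mul_oneKron_transpose_apply {m : Type*} (Z : Matrix m (Fin s) ℝ) (x : m)
    (q : Fin n × Fin s) : (Z * (oneKron n s)ᵀ) x q = Z x q.2 := by
  simp [oneKron, mul_apply]

theorem transpose_oneKron_mul_oneKron :
    (oneKron n s)ᵀ * oneKron n s = (n : ℝ) • (1 : Matrix (Fin s) (Fin s) ℝ) := by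
  ext a b
  rcases eq_or_ne a b with rfl | hab
  · simp [mul_apply, oneKron, Fintype.sum_prod_type]
  · simp [mul_apply, oneKron, Fintype.sum_prod_type, hab, hab.symm]

theorem bdiag_mul_oneKron_apply (p : Fin n × Fin s) (b : Fin s) :
    (bdiag X * oneKron n s) p b = X p (p.1, b) := by
  simp [bdiag, oneKron, mul_apply, Fintype.sum_prod_type]

theorem bdiag_mul_transpose_sub_smul_mul_oneKron (Z : Matrix (Fin n × Fin s) (Fin s) ℝ) (c : ℝ) :
    bdiag (Z * (oneKron n s)ᵀ - c • 1) * oneKron n s = Z - c • oneKron n s := by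
  ext p b
  rw [bdiag_mul_oneKron_apply, Matrix.sub_apply, mul_oneKron_transpose_apply]
  simp [oneKron, one_apply, Prod.ext_iff]

theorem transpose_oneKron_mul_bdiag_mul_oneKron :
    (oneKron n s)ᵀ * (bdiag K * oneKron n s) = ∑ i, blk K i i := by
  ext a b
  simp only [mul_apply (M := (oneKron n s)ᵀ), bdiag_mul_oneKron_apply]
  simp [oneKron, blk, Matrix.sum_apply, Fintype.sum_prod_type]

theorem resist_eq_resistOf (hK : Kᵀ = K) :
    resist K = resistOf K (oneKron n s) (bdiag K * oneKron n s) := by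
  ext p q
  have hUM : (oneKron n s * (bdiag K * oneKron n s)ᵀ) p q = K (q.1, p.2) q := by
    rw [← transpose_apply (oneKron n s * _), transpose_mul, transpose_transpose,
      mul_oneKron_transpose_apply, bdiag_mul_oneKron_apply, ← transpose_apply K, hK]
  simp only [resistOf, Matrix.sub_apply, Matrix.add_apply, hUM, mul_oneKron_transpose_apply,
    bdiag_mul_oneKron_apply]
  rfl

theorem blk_resist_self (i : Fin n) : blk (resist K) i i = 0 := by
  ext a b
  simp only [blk, resist, of_apply, Matrix.zero_apply]
  ring

-- Since the diagonal blocks of `X` vanish, the `i`-th diagonal block of `L * X` only involves the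
-- off-diagonal blocks of the Laplacian `L`, and so equals `-∑ j ∼ i, (W i j)⁻¹ * X j i`.
theorem tauMat_eq_two_smul_oneKron_add (G : SimpleGraph (Fin n)) [DecidableRel G.Adj]
    (W : Fin n → Fin n → Matrix (Fin s) (Fin s) ℝ) (hX : ∀ i, blk X i i = 0) :
    tauMat G W X = (2 : ℝ) • oneKron n s + bdiag (lap G W * X) * oneKron n s := by
  ext ⟨i, a⟩ b
  have hX₀ (x y : Fin s) : X (i, x) (i, y) = 0 := congrFun₂ (hX i) x y
  rw [Matrix.add_apply, bdiag_mul_oneKron_apply]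
  simp only [tauMat, of_apply, Matrix.sub_apply, Matrix.smul_apply, Matrix.sum_apply, mul_apply,
    Fintype.sum_prod_type, oneKron, one_apply, sub_eq_add_neg, blk]
  congr 1
  rw [sum_filter, ← sum_neg_distrib]
  refine sum_congr rfl fun j _ => ?_
  rcases eq_or_ne i j with rfl | hij
  · simp [hX₀]
  · by_cases hadj : G.Adj i j <;> simp [lap, hij, hadj]

theorem dotProduct_mulVec_uncurry_single (i : Fin n) (c : Fin s → ℝ) :
    Function.uncurry (Pi.single i c) ⬝ᵥ (K *ᵥ Function.uncurry (Pi.single i c)) =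
      c ⬝ᵥ (blk K i i *ᵥ c) := by
  have hsum (f : Fin n × Fin s → ℝ) :
      f ⬝ᵥ Function.uncurry (Pi.single i c) = ∑ a, f (i, a) * c a := by
    rw [dotProduct, Fintype.sum_prod_type, Fintype.sum_eq_single i]
    · simp
    · intro j hj
      simp [hj]
  rw [dotProduct_comm, hsum, dotProduct_comm]
  simp only [mulVec, hsum]
  rfl

theorem posDef_blk (hn : 2 ≤ n) (hK : K.PosSemidef)
    (hker : ∀ v, K *ᵥ v = 0 → ∃ c, v = oneKron n s *ᵥ c) (i : Fin n) : (blk K i i).PosDef := by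
  have hblk : (blk K i i).PosSemidef := hK.submatrix (fun a => (i, a))
  refine .of_dotProduct_mulVec_pos hblk.1 fun c hc => ?_
  refine (hblk.dotProduct_mulVec_nonneg c).lt_of_ne' fun h₀ => hc ?_
  -- A vector supported on block `i` and killed by `K` has equal blocks, so it vanishes as `n ≥ 2`.
  rw [star_trivial, ← dotProduct_mulVec_uncurry_single] at h₀
  obtain ⟨d, hd⟩ := hker _ ((hK.dotProduct_mulVec_zero_iff _).1 h₀)
  have hd_apply (j : Fin n) (a : Fin s) : (Pi.single i c : Fin n → Fin s → ℝ) j a = d a :=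
    (congrFun hd (j, a)).trans (oneKron_mulVec_apply d (j, a))
  have : Nontrivial (Fin n) := Fin.nontrivial_iff_two_le.2 hn
  obtain ⟨j, hj⟩ := exists_ne i
  ext a
  calc c a = d a := by simpa using hd_apply i a
    _ = 0 := by simpa [hj] using (hd_apply j a).symm

theorem posDef_transpose_oneKron_mul_bdiag_mul_oneKron (hn : 2 ≤ n) (hK : K.PosSemidef)
    (hker : ∀ v, K *ᵥ v = 0 → ∃ c, v = oneKron n s *ᵥ c) :
    ((oneKron n s)ᵀ * (bdiag K * oneKron n s)).PosDef := by
  have : NeZero n := ⟨by lia⟩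
  rw [transpose_oneKron_mul_bdiag_mul_oneKron]
  exact posDef_sum univ_nonempty fun i _ => posDef_blk hn hK hker i

end Blocks

theorem resist_nonsingular_and_inv_general {n s : ℕ} (hn : 2 ≤ n)
    {L K R : Matrix (Fin n × Fin s) (Fin n × Fin s) ℝ} {τ : Matrix (Fin n × Fin s) (Fin s) ℝ}
    (hL : L.PosSemidef) (hker : ∀ v, L *ᵥ v = 0 ↔ ∃ c, v = oneKron n s *ᵥ c)
    (hK : IsMoorePenrose L K) (hR : R = resist K)
    (hτ : τ = (2 : ℝ) • oneKron n s + bdiag (L * R) * oneKron n s) :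
    IsUnit R.det ∧ R⁻¹ = -(((1 : ℝ) / 2) • L) + τ * (τᵀ * R * τ)⁻¹ * τᵀ := by
  have hn₀ : (0 : ℝ) < n := by positivity
  have hLT : Lᵀ = L := hL.1
  have hKT : Kᵀ = K := hK.transpose_eq hLT
  have hkerK (v) : K *ᵥ v = 0 ↔ ∃ c, v = oneKron n s *ᵥ c :=
    (hK.mulVec_eq_zero_iff hLT).trans (hker v)
  have hLU : L * oneKron n s = 0 := mul_eq_zero_of_ker_eq_range hker
  have hKL := hK.mul_eq_one_sub hker hn₀.ne' transpose_oneKron_mul_oneKron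
  set U := oneKron n s
  set M := bdiag K * U
  rw [resist_eq_resistOf hKT] at hR
  have hLR : L * R = tauOf L U M n * Uᵀ - (2 : ℝ) • 1 :=
    hR ▸ mul_resistOf hLU ((hK.mul_comm hLT).trans hKL)
  replace hτ : τ = tauOf L U M n := by
    rw [hτ, hLR, bdiag_mul_transpose_sub_smul_mul_oneKron, add_sub_cancel]
  have hUτ : Uᵀ * τ = (2 : ℝ) • 1 :=
    hτ ▸ transpose_mul_tauOf hn₀.ne' (by simpa [hLT] using congrArg transpose hLU)
      transpose_oneKron_mul_oneKron
  have hRL : R * L = U * τᵀ - (2 : ℝ) • 1 := by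
    simpa [hLT, hR, hτ, transpose_resistOf hKT] using congrArg transpose hLR
  have hUM : (Uᵀ * M).PosDef :=
    posDef_transpose_oneKron_mul_bdiag_mul_oneKron hn (hK.posSemidef hL) fun v => (hkerK v).1
  have hRτ : R * τ = U * (Mᵀ * L * M + (4 / (n : ℝ)) • (Uᵀ * M)) := by
    subst hR hτ
    exact resistOf_mul_tauOf (mul_eq_zero_of_ker_eq_range hkerK) hKL hUM.1 hUτ
  have hX : (Mᵀ * L * M + (4 / (n : ℝ)) • (Uᵀ * M)).PosDef :=
    .posSemidef_add (hL.conjTranspose_mul_mul_same M) (hUM.smul (by positivity))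
  have hinv := mul_neg_half_smul_add_eq_one two_ne_zero hX.det_pos.ne'.isUnit hRL hRτ
    (by simpa using congrArg transpose hUτ)
  exact ⟨isUnit_det_of_right_inverse hinv, inv_eq_right_inv hinv⟩

/-- The resistance matrix `R` is nonsingular, and
`R⁻¹ = -(1/2) L + τ (τᵀ R τ)⁻¹ τᵀ`. -/
theorem resist_nonsingular_and_inv
    (n s : ℕ) (hn : 2 ≤ n) (hs : 1 ≤ s)
    (G : SimpleGraph (Fin n)) [DecidableRel G.Adj] (hconn : G.Connected)
    (W : Fin n → Fin n → Matrix (Fin s) (Fin s) ℝ)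
    (hWsymm : ∀ i j, W i j = W j i)
    (hWpd : ∀ i j, G.Adj i j → (W i j).PosDef)
    (hPSD : (lap G W).PosSemidef)
    (hrank : (lap G W).rank = n * s - s)
    (hker : ∀ v : Fin n × Fin s → ℝ,
      lap G W *ᵥ v = 0 ↔ ∃ c : Fin s → ℝ, v = oneKron n s *ᵥ c)
    (Ldag : Matrix (Fin n × Fin s) (Fin n × Fin s) ℝ)
    (hMP : IsMoorePenrose (lap G W) Ldag)
    (R : Matrix (Fin n × Fin s) (Fin n × Fin s) ℝ)
    (hR : R = resist Ldag) :
    IsUnit R.det ∧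
      R⁻¹ = -(((1 : ℝ) / 2) • lap G W) +
        tauMat G W R * ((tauMat G W R)ᵀ * R * tauMat G W R)⁻¹ * (tauMat G W R)ᵀ := by
  subst hR
  exact resist_nonsingular_and_inv_general hn hPSD hker hMP rfl
    (tauMat_eq_two_smul_oneKron_add G W blk_resist_self)
end
end

section
/- Let μ_1 ≥ μ_2 ≥ ⋯ ≥ μ_{ns} be the eigenvalues of R and let λ_1 ≥ λ_2 ≥ ⋯ ≥ λ_{ns−s} > λ_{ns−s+1} = ⋯ = λ_{ns} = 0 be the eigenvalues of L. Then for every i = 1, 2, …, ns − s, μ_{s+i} ≤ −2/λ_i ≤ μ_i. -/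
/-!
Write `E = 1 ⊗ Iₛ`, so that `J ⊗ Iₛ = E Eᵀ`. The resistance matrix is
`R = D (J ⊗ Iₛ) + (J ⊗ Iₛ) D - 2 L†`, where `D` is the block diagonal part of `L†`. Since `L E = 0`
and `L` is symmetric, the first two terms vanish in `L R L`, so `L R L = -2 L L† L = -2 L`. If the
columns of `V` are orthonormal eigenvectors of `L` for its nonzero eigenvalues `λᵢ`, this says that
`Vᵀ R V` is diagonal with entries `-2 / λᵢ`. The claim is then Cauchy interlacing between `R` and
its compression `Vᵀ R V`, which follows by comparing the Rayleigh quotients of `R` at a common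
vector of two spans whose dimensions add up to more than `ns`.
-/

open Matrix Finset
open scoped Kronecker

noncomputable section

lemma exists_mulVec_eq_mulVec_of_card_lt {K m ι κ : Type*} [Field K] [Fintype m]
    [Fintype ι] [Fintype κ] (V : Matrix m ι K) (W : Matrix m κ K)
    (hcard : Fintype.card m < Fintype.card ι + Fintype.card κ) :
    ∃ c d, V *ᵥ c = W *ᵥ d ∧ (c ≠ 0 ∨ d ≠ 0) := by
  have hker : LinearMap.ker (fromCols V W).mulVecLin ≠ ⊥ :=
    LinearMap.ker_ne_bot_of_finrank_lt (by simpa using hcard)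
  obtain ⟨x, hx, hx0⟩ := Submodule.exists_mem_ne_zero_of_ne_bot hker
  have hsum : V *ᵥ (x ∘ Sum.inl) + W *ᵥ (x ∘ Sum.inr) = 0 := by
    simpa [fromCols_mulVec] using hx
  refine ⟨x ∘ Sum.inl, -(x ∘ Sum.inr), by rw [mulVec_neg, eq_neg_of_add_eq_zero_left hsum], ?_⟩
  contrapose! hx0
  ext (i | j)
  · exact congrFun hx0.1 i
  · exact congrFun (neg_eq_zero.1 hx0.2) j

lemma mul_submatrix_id_eq_of_mul_eq_mul_diagonal {α m ι κ : Type*} [NonUnitalNonAssocSemiring α]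
    [Fintype m] [Fintype ι] [Fintype κ] [DecidableEq ι] [DecidableEq κ] {A : Matrix m m α}
    {V : Matrix m ι α} {d : ι → α} (h : A * V = V * diagonal d) (f : κ → ι) :
    A * V.submatrix id f = V.submatrix id f * diagonal (d ∘ f) := by
  ext p j
  rw [mul_diagonal]
  exact (congrFun₂ h p (f j)).trans (mul_diagonal ..)

section Compression

variable {𝕜 m ι κ : Type*} [RCLike 𝕜] [Fintype m] [DecidableEq ι] [DecidableEq κ]

/-- The columns of `V` are orthonormal, and the compression of `A` to their span, written in the
basis they form, is diagonal with real entries `θ`. The relation `A * V = V * diagonal θ` is not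
required, so for a non-square `V` the columns need not be eigenvectors of `A`. -/
structure DiagonalizesCompression (A : Matrix m m 𝕜) (V : Matrix m ι 𝕜) (θ : ι → ℝ) : Prop where
  conjTranspose_mul_self : Vᴴ * V = 1
  conjTranspose_mul_mul : Vᴴ * A * V = diagonal fun i => (θ i : 𝕜)

lemma star_mulVec_dotProduct_mulVec_of_eq_diagonal [Fintype ι] {A : Matrix m m 𝕜}
    {V : Matrix m ι 𝕜} {θ : ι → ℝ} (h : Vᴴ * A * V = diagonal fun i => (θ i : 𝕜)) (c : ι → 𝕜) :
    star (V *ᵥ c) ⬝ᵥ (A *ᵥ (V *ᵥ c)) = ((∑ i, θ i * ‖c i‖ ^ 2 : ℝ) : 𝕜) := by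
  calc star (V *ᵥ c) ⬝ᵥ (A *ᵥ (V *ᵥ c)) = star c ⬝ᵥ ((Vᴴ * A * V) *ᵥ c) := by
        simp only [star_mulVec, ← dotProduct_mulVec, mulVec_mulVec, Matrix.mul_assoc]
    _ = ∑ i, (θ i : 𝕜) * (star (c i) * c i) := by
        rw [h]
        simp only [dotProduct, mulVec_diagonal, Pi.star_apply, mul_left_comm]
    _ = ((∑ i, θ i * ‖c i‖ ^ 2 : ℝ) : 𝕜) := by
        simp [RCLike.conj_mul]

namespace DiagonalizesCompression

variable {A : Matrix m m 𝕜} {V : Matrix m ι 𝕜} {W : Matrix m κ 𝕜} {α : ι → ℝ} {β : κ → ℝ}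

lemma submatrix (hV : DiagonalizesCompression A V α) {f : κ → ι} (hf : f.Injective) :
    DiagonalizesCompression A (V.submatrix id f) (α ∘ f) where
  conjTranspose_mul_self := by
    rw [conjTranspose_submatrix, ← submatrix_mul _ _ f id f Function.bijective_id,
      hV.conjTranspose_mul_self, submatrix_one f hf]
  conjTranspose_mul_mul := by
    have hblock := congrArg (Matrix.submatrix · f f) hV.conjTranspose_mul_mul
    simpa [submatrix_diagonal _ f hf, submatrix_mul _ _ f id f Function.bijective_id,
      submatrix_mul _ _ f id id Function.bijective_id, Function.comp_def] using hblock

lemma le_of_card_lt [Fintype ι] [Fintype κ] (hV : DiagonalizesCompression A V α)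
    (hW : DiagonalizesCompression A W β)
    (hcard : Fintype.card m < Fintype.card ι + Fintype.card κ) {x y : ℝ}
    (hx : ∀ i, x ≤ α i) (hy : ∀ j, β j ≤ y) : x ≤ y := by
  classical
  obtain ⟨c, d, hcd, hne⟩ := exists_mulVec_eq_mulVec_of_card_lt V W hcard
  have hquad : ∑ i, α i * ‖c i‖ ^ 2 = ∑ j, β j * ‖d j‖ ^ 2 := by
    have hc := star_mulVec_dotProduct_mulVec_of_eq_diagonal hV.conjTranspose_mul_mul c
    rw [hcd, star_mulVec_dotProduct_mulVec_of_eq_diagonal hW.conjTranspose_mul_mul d] at hc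
    exact (RCLike.ofReal_inj.1 hc).symm
  have hnorm : ∑ i, ‖c i‖ ^ 2 = ∑ j, ‖d j‖ ^ 2 := by
    have hc := star_mulVec_dotProduct_mulVec_of_eq_diagonal (A := 1) (V := V) (θ := 1)
      (by simp [hV.conjTranspose_mul_self]) c
    rw [hcd, star_mulVec_dotProduct_mulVec_of_eq_diagonal (A := 1) (V := W) (θ := 1)
      (by simp [hW.conjTranspose_mul_self]) d] at hc
    simpa using (RCLike.ofReal_inj.1 hc).symm
  have hpos : 0 < ∑ i, ‖c i‖ ^ 2 := by
    rcases hne with hc | hd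
    · obtain ⟨i, hi⟩ := Function.ne_iff.1 hc
      exact sum_pos' (fun _ _ => by positivity) ⟨i, mem_univ i, pow_pos (norm_pos_iff.2 hi) 2⟩
    · obtain ⟨j, hj⟩ := Function.ne_iff.1 hd
      rw [hnorm]
      exact sum_pos' (fun _ _ => by positivity) ⟨j, mem_univ j, pow_pos (norm_pos_iff.2 hj) 2⟩
  refine le_of_mul_le_mul_right ?_ hpos
  calc x * ∑ i, ‖c i‖ ^ 2 ≤ ∑ i, α i * ‖c i‖ ^ 2 := by
        rw [mul_sum]
        gcongr with i
        exact hx i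
    _ = ∑ j, β j * ‖d j‖ ^ 2 := hquad
    _ ≤ y * ∑ i, ‖c i‖ ^ 2 := by
        rw [hnorm, mul_sum]
        gcongr with j
        exact hy j

section Interlacing

variable {r k : ℕ} {U : Matrix m (Fin (r + k)) 𝕜} {V : Matrix m (Fin r) 𝕜}
  {μ : Fin (r + k) → ℝ} {θ : Fin r → ℝ}

lemma le_apply_castAdd (hU : DiagonalizesCompression A U μ) (hV : DiagonalizesCompression A V θ)
    (hcard : Fintype.card m = r + k) (hμ : Antitone μ) (hθ : Antitone θ) (i : Fin r) :
    θ i ≤ μ (i.castAdd k) := by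
  refine (hV.submatrix (f := ((↑) : Iic i → Fin r)) Subtype.val_injective).le_of_card_lt
    (hU.submatrix (f := ((↑) : Ici (i.castAdd k) → _)) Subtype.val_injective) ?_
    (fun j => hθ (mem_Iic.1 j.2)) (fun j => hμ (mem_Ici.1 j.2))
  simp only [hcard, Fintype.card_coe, Fin.card_Iic, Fin.card_Ici, Fin.val_castAdd]
  omega

lemma apply_addNat_le (hU : DiagonalizesCompression A U μ) (hV : DiagonalizesCompression A V θ)
    (hcard : Fintype.card m = r + k) (hμ : Antitone μ) (hθ : Antitone θ) (i : Fin r) :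
    μ (i.addNat k) ≤ θ i := by
  refine (hU.submatrix (f := ((↑) : Iic (i.addNat k) → _)) Subtype.val_injective).le_of_card_lt
    (hV.submatrix (f := ((↑) : Ici i → Fin r)) Subtype.val_injective) ?_
    (fun j => hμ (mem_Iic.1 j.2)) (fun j => hθ (mem_Ici.1 j.2))
  simp only [hcard, Fintype.card_coe, Fin.card_Iic, Fin.card_Ici, Fin.val_addNat]
  omega

end Interlacing

lemma of_mul_eq_mul_diagonal [Fintype ι] (hV : Vᴴ * V = 1)
    (hAV : A * V = V * diagonal fun i => (α i : 𝕜)) : DiagonalizesCompression A V α :=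
  ⟨hV, by rw [Matrix.mul_assoc, hAV, ← Matrix.mul_assoc, hV, Matrix.one_mul]⟩

lemma of_mul_mul_eq_smul [Fintype ι] {L R : Matrix m m 𝕜} (hL : L.IsHermitian) {a : ℝ}
    (hLRL : L * R * L = (a : 𝕜) • L) (hα : ∀ i, α i ≠ 0) (hV : Vᴴ * V = 1)
    (hLV : L * V = V * diagonal fun i => (α i : 𝕜)) :
    DiagonalizesCompression R V fun i => a / α i := by
  set D : Matrix ι ι 𝕜 := diagonal fun i => (α i : 𝕜) with hD
  have hVL : Vᴴ * L = D * Vᴴ := by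
    simpa [hL.eq, hD, Pi.star_def] using congrArg conjTranspose hLV
  have hsandwich : D * (Vᴴ * R * V) * D = (a : 𝕜) • D := by
    calc D * (Vᴴ * R * V) * D = Vᴴ * (L * R * L) * V := by
          simp only [← Matrix.mul_assoc, ← hVL]
          simp only [Matrix.mul_assoc, hLV]
      _ = (a : 𝕜) • D := by
          rw [hLRL, Matrix.mul_smul, Matrix.smul_mul, Matrix.mul_assoc, hLV, ← Matrix.mul_assoc, hV,
            Matrix.one_mul]
  refine ⟨hV, ?_⟩
  ext i j
  have hi : (α i : 𝕜) ≠ 0 := RCLike.ofReal_ne_zero.2 (hα i)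
  have hj : (α j : 𝕜) ≠ 0 := RCLike.ofReal_ne_zero.2 (hα j)
  have hentry : (α i : 𝕜) * (Vᴴ * R * V) i j * α j = a * D i j := by
    simpa [hD] using congrFun₂ hsandwich i j
  refine mul_left_cancel₀ hi (mul_right_cancel₀ hj (hentry.trans ?_))
  rcases eq_or_ne i j with rfl | hij
  · simp only [hD, diagonal_apply_eq]
    push_cast
    field_simp
  · simp [hD, hij]

end DiagonalizesCompression

end Compression

lemma exists_equiv_of_map_univ_val_eq {α β γ : Type*} [Fintype α] [Fintype β] {f : α → γ}
    {g : β → γ} (h : univ.val.map f = univ.val.map g) : ∃ e : α ≃ β, f = g ∘ e := by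
  classical
  have hfiber (c : γ) : Nonempty ({a // f a = c} ≃ {b // g b = c}) := by
    have hcount := congrArg (Multiset.count c) h
    rw [Multiset.count_map, Multiset.count_map] at hcount
    rw [← Fintype.card_eq, Fintype.card_subtype, Fintype.card_subtype]
    simpa [Finset.card, eq_comm] using hcount
  let e (c : γ) := (hfiber c).some
  exact ⟨.ofFiberEquiv e, funext fun a => (Equiv.ofFiberEquiv_map e a).symm⟩

section Eigenvalues

variable {𝕜 m : Type*} [RCLike 𝕜] [Fintype m] [DecidableEq m]

lemma exists_orthonormal_eigenvectors {ι : Type*} [Fintype ι] [DecidableEq ι] {A : Matrix m m 𝕜}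
    (hA : A.IsHermitian) {μ : ι → ℝ} (hμ : univ.val.map μ = univ.val.map hA.eigenvalues) :
    ∃ U : Matrix m ι 𝕜, Uᴴ * U = 1 ∧ A * U = U * diagonal fun i => (μ i : 𝕜) := by
  obtain ⟨e, rfl⟩ := exists_equiv_of_map_univ_val_eq hμ
  refine ⟨(hA.eigenvectorUnitary : Matrix m m 𝕜).submatrix id e, ?_, ?_⟩
  · rw [conjTranspose_submatrix, ← submatrix_mul _ _ e id e Function.bijective_id,
      ← star_eq_conjTranspose, Unitary.coe_star_mul_self, submatrix_one_equiv]
  · ext i j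
    rw [mul_diagonal, mul_comm, ← RCLike.real_smul_eq_coe_mul]
    exact congrFun (hA.mulVec_eigenvectorBasis (e j)) i

theorem eigenvalue_interlacing_of_mul_mul_eq_smul {L R : Matrix m m 𝕜} (hL : L.IsHermitian)
    (hR : R.IsHermitian) {a : ℝ} (ha : a ≤ 0) (hLRL : L * R * L = (a : 𝕜) • L) {N r k : ℕ}
    (hN : r + k = N) {μ lam : Fin N → ℝ} (hμ : Antitone μ) (hlam : Antitone lam)
    (hμR : univ.val.map μ = univ.val.map hR.eigenvalues)
    (hlamL : univ.val.map lam = univ.val.map hL.eigenvalues)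
    (hpos : ∀ i : Fin N, (i : ℕ) < r → 0 < lam i) (i : Fin N) (hi : (i : ℕ) < r) :
    μ ⟨k + i, by omega⟩ ≤ a / lam i ∧ a / lam i ≤ μ i := by
  subst hN
  have hcard : Fintype.card m = r + k := by simpa using (congrArg Multiset.card hμR).symm
  obtain ⟨U, hU, hRU⟩ := exists_orthonormal_eigenvectors hR hμR
  obtain ⟨V, hV, hLV⟩ := exists_orthonormal_eigenvectors hL hlamL
  have hlamr (j : Fin r) : 0 < lam (j.castAdd k) := hpos _ (by simp)
  have hUμ := DiagonalizesCompression.of_mul_eq_mul_diagonal hU hRU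
  have hVlam := (DiagonalizesCompression.of_mul_eq_mul_diagonal hV hLV).submatrix
    (Fin.castAdd_injective r k)
  have hVθ := DiagonalizesCompression.of_mul_mul_eq_smul hL hLRL (fun j => (hlamr j).ne')
    hVlam.conjTranspose_mul_self
    (mul_submatrix_id_eq_of_mul_eq_mul_diagonal hLV (Fin.castAdd k))
  have hθ : Antitone fun j : Fin r => a / lam (j.castAdd k) := fun j l hjl =>
    by simpa only [div_eq_mul_inv] using
      mul_le_mul_of_nonpos_left (inv_anti₀ (hlamr l) (hlam hjl)) ha
  have hlower := hUμ.apply_addNat_le hVθ hcard hμ hθ ⟨i, hi⟩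
  have hupper := hUμ.le_apply_castAdd hVθ hcard hμ hθ ⟨i, hi⟩
  simp only [Fin.addNat_mk, add_comm _ k] at hlower
  exact ⟨hlower, hupper⟩

end Eigenvalues

section Resistance

variable {n s : ℕ}

lemma oneKron_mul_transpose : oneKron n s * (oneKron n s)ᵀ = JKron n s := by
  ext p q
  simp [oneKron, JKron, mul_apply, one_apply]

lemma resist_eq_bdiag_mul_JKron_add (K : Matrix (Fin n × Fin s) (Fin n × Fin s) ℝ) :
    resist K = bdiag K * JKron n s + JKron n s * bdiag K - (2 : ℝ) • K := by
  ext p q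
  simp [resist, bdiag, JKron, mul_apply, one_apply, Fintype.sum_prod_type]

lemma mul_resist_mul_of_mul_oneKron_eq_zero {L : Matrix (Fin n × Fin s) (Fin n × Fin s) ℝ}
    (hL : L.IsHermitian) (hLone : L * oneKron n s = 0)
    (K : Matrix (Fin n × Fin s) (Fin n × Fin s) ℝ) :
    L * resist K * L = (-2 : ℝ) • (L * K * L) := by
  have hLJ : L * JKron n s = 0 := by
    rw [← oneKron_mul_transpose, ← Matrix.mul_assoc, hLone, Matrix.zero_mul]
  have hJL : JKron n s * L = 0 := by
    have hJ : (JKron n s)ᴴ = JKron n s := by simp [← oneKron_mul_transpose]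
    simpa only [conjTranspose_mul, hL.eq, hJ, conjTranspose_zero] using congrArg conjTranspose hLJ
  rw [resist_eq_bdiag_mul_JKron_add]
  simp only [Matrix.mul_add, Matrix.mul_sub, Matrix.add_mul, Matrix.sub_mul, ← Matrix.mul_assoc]
  simp [hLJ, Matrix.mul_assoc, hJL]

theorem resist_lap_eigenvalue_interlacing_general
    {L K : Matrix (Fin n × Fin s) (Fin n × Fin s) ℝ} (hL : L.IsHermitian)
    (hker : ∀ c, L *ᵥ (oneKron n s *ᵥ c) = 0) (hLKL : L * K * L = L) (hR : (resist K).IsHermitian)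
    {r k : ℕ} (hrk : r + k = n * s) {μ lam : Fin (n * s) → ℝ}
    (hμ : Antitone μ) (hlam : Antitone lam)
    (hμR : univ.val.map μ = univ.val.map hR.eigenvalues)
    (hlamL : univ.val.map lam = univ.val.map hL.eigenvalues)
    (hpos : ∀ i : Fin (n * s), (i : ℕ) < r → 0 < lam i) (i : Fin (n * s)) (hi : (i : ℕ) < r) :
    μ ⟨k + i, by omega⟩ ≤ -2 / lam i ∧ -2 / lam i ≤ μ i := by
  have hLone : L * oneKron n s = 0 := ext_of_mulVec_single fun b => by
    rw [← mulVec_mulVec, hker, zero_mulVec]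
  refine eigenvalue_interlacing_of_mul_mul_eq_smul hL hR (by norm_num) ?_ hrk hμ hlam hμR hlamL
    hpos i hi
  rw [mul_resist_mul_of_mul_oneKron_eq_zero hL hLone, hLKL, RCLike.ofReal_real_eq_id, id]

end Resistance

/-- Interlacing: if `μ₁ ≥ ⋯ ≥ μ_{ns}` are the eigenvalues of `R` and
`λ₁ ≥ ⋯ ≥ λ_{ns-s} > λ_{ns-s+1} = ⋯ = λ_{ns} = 0` are the eigenvalues of `L`,
then `μ_{s+i} ≤ -2/λᵢ ≤ μᵢ` for `i = 1, …, ns - s` (indices here are 0-based,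
so `μ i` is the `(i+1)`-st largest eigenvalue). -/
theorem resist_lap_eigenvalue_interlacing
    (n s : ℕ) (hn : 2 ≤ n) (hs : 1 ≤ s)
    (G : SimpleGraph (Fin n)) [DecidableRel G.Adj] (hconn : G.Connected)
    (W : Fin n → Fin n → Matrix (Fin s) (Fin s) ℝ)
    (hWsymm : ∀ i j, W i j = W j i)
    (hWpd : ∀ i j, G.Adj i j → (W i j).PosDef)
    (hPSD : (lap G W).PosSemidef)
    (hrank : (lap G W).rank = n * s - s)
    (hker : ∀ v : Fin n × Fin s → ℝ,
      lap G W *ᵥ v = 0 ↔ ∃ c : Fin s → ℝ, v = oneKron n s *ᵥ c)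
    (Ldag : Matrix (Fin n × Fin s) (Fin n × Fin s) ℝ)
    (hMP : IsMoorePenrose (lap G W) Ldag)
    (R : Matrix (Fin n × Fin s) (Fin n × Fin s) ℝ)
    (hR : R = resist Ldag)
    (hRH : R.IsHermitian)
    (μ lam : Fin (n * s) → ℝ)
    (hμanti : Antitone μ) (hlamanti : Antitone lam)
    (hμeig : Finset.univ.val.map μ = Finset.univ.val.map hRH.eigenvalues)
    (hlameig : Finset.univ.val.map lam = Finset.univ.val.map hPSD.1.eigenvalues)
    (hlampos : ∀ i : Fin (n * s), (i : ℕ) < n * s - s → 0 < lam i)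
    (hlamzero : ∀ i : Fin (n * s), n * s - s ≤ (i : ℕ) → lam i = 0) :
    ∀ i : Fin (n * s), ∀ _ : (i : ℕ) < n * s - s,
      μ ⟨s + (i : ℕ), by omega⟩ ≤ -2 / lam i ∧ -2 / lam i ≤ μ i := by
  subst hR
  exact resist_lap_eigenvalue_interlacing_general hPSD.1 (fun c => (hker _).2 ⟨c, rfl⟩) hMP.1 hRH
    (Nat.sub_add_cancel (Nat.le_mul_of_pos_left s (by omega))) hμanti hlamanti hμeig hlameig hlampos
end
end
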